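/- Let α ∈ (0,1), β > 1 and c > 0. Then, as x → ∞, Σ_{n=1}^∞ n^{−α}(x + cn)^{−β} ∼ c^{α−1} B(1 − α, β + α − 1) · x^{1−α−β}, where B denotes the Beta function; in particular, for any fixed N ≥ 1, Σ_{n=1}^N n^{−α}(x + cn)^{−β} = O(x^{−β}) = o(x^{1−α−β}). -/

import Mathlib

/- Asymptotics of the series in Example 2:  for `α ∈ (0,1)`, `β > 1`, `c > 0`, as `x → ∞`,
`Σ_{n=1}^∞ n^{-α} (x + cn)^{-β} ∼ c^{α-1} B(1-α, β+α-1) x^{1-α-β}`, where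
`B(a,b) = ∫_0^1 t^{a-1} (1-t)^{b-1} dt` is the Euler Beta function; in particular, for any
fixed `N ≥ 1`, `Σ_{n=1}^N n^{-α} (x + cn)^{-β} = O(x^{-β}) = o(x^{1-α-β})`. -/

open Filter Asymptotics

noncomputable section

/-- The Euler Beta function `B(a,b) = ∫_0^1 t^{a-1} (1-t)^{b-1} dt`. -/
def eulerBeta (a b : ℝ) : ℝ :=
  ∫ t in Set.Ioo (0 : ℝ) 1, t ^ (a - 1) * (1 - t) ^ (b - 1)

/-!
Put `g s = s ^ (-α) * (1 + s) ^ (-β)`. Homogeneity gives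
`n ^ (-α) * (x + c * n) ^ (-β) = c ^ α * x ^ (-(α + β)) * g (h * n)` with mesh `h = c / x`, so the
series is `c ^ (α - 1) * x ^ (1 - α - β)` times the infinite Riemann sum `h * ∑ g (h * n)`. As
`x → ∞` the mesh tends to `0`, and dominated convergence, with an antitone integrable majorant of
`g`, shows that the Riemann sums converge to `∫ g` over `(0, ∞)`, which the substitution
`u = s / (1 + s)` turns into `B(1 - α, β + α - 1)`.
-/

open MeasureTheory Set Topology

theorem tendsto_mul_natCeil_div {t : ℝ} (ht : 0 ≤ t) :
    Tendsto (fun h : ℝ => h * ⌈t / h⌉₊) (𝓝[>] 0) (𝓝 t) := by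
  refine ((tendsto_nat_ceil_mul_div_atTop ht).comp tendsto_inv_nhdsGT_zero).congr fun h => ?_
  rw [Function.comp_apply, div_inv_eq_mul, ← div_eq_mul_inv, mul_comm]

section RiemannSum

variable {E : Type*} [NormedAddCommGroup E] [NormedSpace ℝ E] [CompleteSpace E]

theorem hasSum_integral_comp_natCeil {φ : ℕ → E}
    (hφ : IntegrableOn (fun t : ℝ => φ ⌈t⌉₊) (Ioi 0)) :
    HasSum (fun n => φ (n + 1)) (∫ t in Ioi (0 : ℝ), φ ⌈t⌉₊) := by
  let cell (n : ℕ) : Set ℝ := Nat.ceil ⁻¹' {n + 1}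
  have hmeas (n : ℕ) : MeasurableSet (cell n) := Nat.measurable_ceil (measurableSet_singleton _)
  have hdisj : Pairwise (Function.onFun Disjoint cell) := fun m n hmn =>
    (disjoint_singleton.2 (by simpa using hmn)).preimage _
  have hcover : ⋃ n, cell n = Ioi 0 := by
    ext t
    rw [mem_iUnion, mem_Ioi, ← Nat.ceil_pos]
    exact ⟨fun ⟨n, hn⟩ => hn ▸ n.succ_pos, fun ht => ⟨⌈t⌉₊ - 1, (Nat.sub_add_cancel ht).symm⟩⟩
  have hcell (n : ℕ) : ∫ t in cell n, φ ⌈t⌉₊ = φ (n + 1) := by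
    have hIoc : cell n = Ioc (n : ℝ) (n + 1) := by
      simpa using Nat.preimage_ceil_of_ne_zero (R := ℝ) n.succ_ne_zero
    rw [setIntegral_congr_fun (hmeas n) fun t ht => congrArg φ ht, setIntegral_const, hIoc]
    simp
  rw [← hcover] at hφ ⊢
  simpa only [hcell] using hasSum_integral_iUnion hmeas hdisj hφ

theorem integral_comp_mul_natCeil_div {g : ℝ → E} {h : ℝ} (hh : 0 < h)
    (hg : IntegrableOn (fun t => g (h * ⌈t / h⌉₊)) (Ioi 0)) :
    ∫ t in Ioi 0, g (h * ⌈t / h⌉₊) = h • ∑' n : ℕ, g (h * (n + 1)) := by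
  have hcancel (t : ℝ) : h * t / h = t := mul_div_cancel_left₀ t hh.ne'
  have hint := (integrableOn_Ioi_comp_mul_left_iff (fun t => g (h * ⌈t / h⌉₊)) 0 hh).2
    (by rwa [mul_zero])
  have hscale := integral_comp_mul_left_Ioi' (fun t => g (h * ⌈t / h⌉₊)) 0 hh
  simp only [hcancel, mul_zero] at hint hscale
  have hsum := (hasSum_integral_comp_natCeil (φ := fun n => g (h * n)) hint).tsum_eq
  simp only [← hscale, ← hsum, Nat.cast_add, Nat.cast_one]

theorem tendsto_smul_tsum_nhdsGT_integral_Ioi {g : ℝ → E} {G : ℝ → ℝ} (hg : ContinuousOn g (Ioi 0))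
    (hGanti : AntitoneOn G (Ioi 0)) (hGint : IntegrableOn G (Ioi 0))
    (hgG : ∀ t ∈ Ioi (0 : ℝ), ‖g t‖ ≤ G t) :
    Tendsto (fun h : ℝ => h • ∑' n : ℕ, g (h * (n + 1))) (𝓝[>] 0) (𝓝 (∫ t in Ioi 0, g t)) := by
  have hmeas : ∀ h : ℝ, AEStronglyMeasurable (fun t => g (h * ⌈t / h⌉₊))
      (volume.restrict (Ioi 0)) := fun h =>
    ((StronglyMeasurable.of_discrete (f := fun n : ℕ => g (h * n))).comp_measurable
      (Nat.measurable_ceil.comp (measurable_id.div_const h))).aestronglyMeasurable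
  have hbound : ∀ h > 0, ∀ᵐ t ∂volume.restrict (Ioi 0), ‖g (h * ⌈t / h⌉₊)‖ ≤ G t := fun h hh => by
    filter_upwards [ae_restrict_mem measurableSet_Ioi] with t ht
    have hle : t ≤ h * ⌈t / h⌉₊ := (div_le_iff₀' hh).1 (Nat.le_ceil _)
    have hpos := (mem_Ioi.1 ht).trans_le hle
    exact (hgG _ hpos).trans (hGanti ht hpos hle)
  have hlim : ∀ᵐ t ∂volume.restrict (Ioi 0),
      Tendsto (fun h => g (h * ⌈t / h⌉₊)) (𝓝[>] 0) (𝓝 (g t)) := by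
    filter_upwards [ae_restrict_mem measurableSet_Ioi] with t ht
    exact (hg.continuousAt (Ioi_mem_nhds ht)).tendsto.comp (tendsto_mul_natCeil_div (le_of_lt ht))
  have hdom := tendsto_integral_filter_of_dominated_convergence (l := 𝓝[>] (0 : ℝ)) G
    (Eventually.of_forall hmeas) (eventually_mem_nhdsWithin.mono hbound) hGint hlim
  refine hdom.congr' (eventually_mem_nhdsWithin.mono fun h hh => ?_)
  exact integral_comp_mul_natCeil_div hh (hGint.mono' (hmeas h) (hbound h hh))

end RiemannSum

theorem eulerBeta_eq_beta {a b : ℝ} (ha : 0 < a) (hb : 0 < b) :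
    eulerBeta a b = ProbabilityTheory.beta a b := by
  rw [ProbabilityTheory.beta_eq_betaIntegralReal a b ha hb, Complex.betaIntegral,
    intervalIntegral.integral_of_le zero_le_one, integral_Ioc_eq_integral_Ioo, eulerBeta,
    ← Complex.ofReal_re (∫ t in Ioo (0 : ℝ) 1, t ^ (a - 1) * (1 - t) ^ (b - 1)),
    ← integral_complex_ofReal]
  congr 1
  refine setIntegral_congr_fun measurableSet_Ioo fun t ht => ?_
  have ht1 : 0 ≤ 1 - t := sub_nonneg.2 ht.2.le
  push_cast [Complex.ofReal_cpow ht.1.le, Complex.ofReal_cpow ht1]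
  rfl

theorem eulerBeta_pos {a b : ℝ} (ha : 0 < a) (hb : 0 < b) : 0 < eulerBeta a b :=
  eulerBeta_eq_beta ha hb ▸ ProbabilityTheory.beta_pos ha hb

/-- The integrand of the Beta function `B(a, b)` after the substitution `u = s / (1 + s)`, that is,
the unnormalized density on `(0, ∞)` of the beta prime distribution. -/
def betaPrimeKernel (a b s : ℝ) : ℝ :=
  s ^ (a - 1) * (1 + s) ^ (-(a + b))

theorem continuousOn_betaPrimeKernel (a b : ℝ) : ContinuousOn (betaPrimeKernel a b) (Ioi 0) := by
  intro s (hs : 0 < s)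
  have hs1 : 1 + s ≠ 0 := by positivity
  exact ((Real.continuousAt_rpow_const s _ (.inl hs.ne')).mul
    ((continuousAt_const.add continuousAt_id).rpow_const (.inl hs1))).continuousWithinAt

theorem betaPrimeKernel_nonneg (a b : ℝ) {s : ℝ} (hs : 0 < s) : 0 ≤ betaPrimeKernel a b s := by
  unfold betaPrimeKernel
  positivity

theorem betaPrimeKernel_le_of_le {a a' : ℝ} (haa' : a' ≤ a) (b : ℝ) {s : ℝ} (hs : 0 < s) :
    betaPrimeKernel a b s ≤ betaPrimeKernel a' b s := by
  calc betaPrimeKernel a b s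
      = s ^ (a' - 1) * s ^ (a - a') * (1 + s) ^ (-(a + b)) := by
        rw [betaPrimeKernel, ← Real.rpow_add hs]
        ring_nf
    _ ≤ s ^ (a' - 1) * (1 + s) ^ (a - a') * (1 + s) ^ (-(a + b)) := by
        gcongr
        linarith
    _ = betaPrimeKernel a' b s := by
        rw [betaPrimeKernel, mul_assoc, ← Real.rpow_add (by positivity)]
        ring_nf

theorem antitoneOn_betaPrimeKernel {a b : ℝ} (ha : a ≤ 1) (hab : 0 ≤ a + b) :
    AntitoneOn (betaPrimeKernel a b) (Ioi 0) := by
  intro s (hs : 0 < s) t (ht : 0 < t) hst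
  exact mul_le_mul (Real.rpow_le_rpow_of_nonpos hs hst (by linarith))
    (Real.rpow_le_rpow_of_nonpos (by positivity) (by linarith) (by linarith))
    (by positivity) (by positivity)

theorem image_div_one_add_Ioi : (fun s : ℝ => s / (1 + s)) '' Ioi 0 = Ioo 0 1 := by
  ext u
  constructor
  · rintro ⟨s, hs : 0 < s, rfl⟩
    exact ⟨by positivity, (div_lt_one (by positivity)).2 (by linarith)⟩
  · rintro ⟨hu0, hu1⟩
    have hu : 0 < 1 - u := sub_pos.2 hu1
    refine ⟨u / (1 - u), div_pos hu0 hu, ?_⟩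
    field_simp
    ring

theorem injOn_div_one_add_Ioi : InjOn (fun s : ℝ => s / (1 + s)) (Ioi 0) := by
  intro s (hs : 0 < s) t (ht : 0 < t) hst
  have := (div_eq_div_iff (by positivity) (by positivity)).1 hst
  linarith

theorem hasDerivAt_div_one_add {s : ℝ} (hs : 1 + s ≠ 0) :
    HasDerivAt (fun s : ℝ => s / (1 + s)) (((1 + s) ^ 2)⁻¹) s := by
  convert! (hasDerivAt_id s).div ((hasDerivAt_id s).const_add 1) hs using 1
  simp

theorem betaPrimeKernel_eq_deriv_mul (a b : ℝ) {s : ℝ} (hs : 0 < s) :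
    betaPrimeKernel a b s =
      ((1 + s) ^ 2)⁻¹ * ((s / (1 + s)) ^ (a - 1) * (1 - s / (1 + s)) ^ (b - 1)) := by
  have hs1 : 0 < 1 + s := by positivity
  have hcompl : 1 - s / (1 + s) = (1 + s)⁻¹ := by field_simp; ring
  rw [hcompl, Real.div_rpow hs.le hs1.le, div_eq_mul_inv, Real.inv_rpow hs1.le,
    ← Real.rpow_natCast, ← Real.rpow_neg hs1.le, ← Real.rpow_neg hs1.le, ← Real.rpow_neg hs1.le,
    mul_assoc, mul_left_comm, ← Real.rpow_add hs1, ← Real.rpow_add hs1, betaPrimeKernel]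
  push_cast
  ring_nf

theorem integral_betaPrimeKernel (a b : ℝ) :
    ∫ s in Ioi 0, betaPrimeKernel a b s = eulerBeta a b := by
  rw [eulerBeta, ← image_div_one_add_Ioi, integral_image_eq_integral_abs_deriv_smul
    measurableSet_Ioi
    (fun s (hs : 0 < s) => (hasDerivAt_div_one_add (by positivity)).hasDerivWithinAt)
    injOn_div_one_add_Ioi]
  refine setIntegral_congr_fun measurableSet_Ioi fun s hs => ?_
  simp only [abs_inv, abs_pow, sq_abs, smul_eq_mul]
  exact betaPrimeKernel_eq_deriv_mul a b hs

theorem integrableOn_betaPrimeKernel {a b : ℝ} (ha : 0 < a) (hb : 0 < b) :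
    IntegrableOn (betaPrimeKernel a b) (Ioi 0) :=
  .of_integral_ne_zero (integral_betaPrimeKernel a b ▸ (eulerBeta_pos ha hb).ne')

theorem tendsto_mul_tsum_betaPrimeKernel {a b : ℝ} (ha : 0 < a) (hb : 0 < b) :
    Tendsto (fun h : ℝ => h * ∑' n : ℕ, betaPrimeKernel a b (h * (n + 1))) (𝓝[>] 0)
      (𝓝 (eulerBeta a b)) := by
  -- For `1 < a` the kernel is not monotone; the antitone kernel with `a = 1` is a majorant.
  have ha' : 0 < min a 1 := lt_min ha one_pos
  rw [← integral_betaPrimeKernel]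
  refine tendsto_smul_tsum_nhdsGT_integral_Ioi (continuousOn_betaPrimeKernel a b)
    (antitoneOn_betaPrimeKernel (min_le_right a 1) (by positivity))
    (integrableOn_betaPrimeKernel ha' hb) fun s hs => ?_
  rw [Real.norm_of_nonneg (betaPrimeKernel_nonneg a b hs)]
  exact betaPrimeKernel_le_of_le (min_le_left a 1) b hs

theorem rpow_neg_mul_rpow_neg_eq_betaPrimeKernel (α β : ℝ) {c x t : ℝ} (hc : 0 < c) (hx : 0 < x)
    (ht : 0 < t) :
    t ^ (-α) * (x + c * t) ^ (-β) =
      c ^ α * x ^ (-(α + β)) * betaPrimeKernel (1 - α) (β + α - 1) (c / x * t) := by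
  have hfactor : x + c * t = x * (1 + c / x * t) := by field_simp
  have hα : 1 - α - 1 = -α := by ring
  have hβ : -(1 - α + (β + α - 1)) = -β := by ring
  have hc' : c ^ α * c ^ (-α) = 1 := by rw [← Real.rpow_add hc, add_neg_cancel, Real.rpow_zero]
  have hx' : x ^ (-(α + β)) * x ^ α = x ^ (-β) := by
    rw [← Real.rpow_add hx]
    ring_nf
  rw [betaPrimeKernel, hα, hβ, hfactor, Real.mul_rpow hx.le (by positivity),
    Real.mul_rpow (by positivity) ht.le, Real.div_rpow hc.le hx.le, Real.rpow_neg hx.le α,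
    div_inv_eq_mul, ← hx']
  linear_combination (-(t ^ (-α) * x ^ (-(α + β)) * x ^ α * (1 + c / x * t) ^ (-β))) * hc'

theorem tsum_rpow_neg_mul_rpow_neg_eq (α β : ℝ) {c x : ℝ} (hc : 0 < c) (hx : 0 < x) :
    ∑' n : ℕ, ((n : ℝ) + 1) ^ (-α) * (x + c * ((n : ℝ) + 1)) ^ (-β) =
      c ^ (α - 1) * x ^ (1 - α - β) *
        (c / x * ∑' n : ℕ, betaPrimeKernel (1 - α) (β + α - 1) (c / x * (n + 1))) := by
  have hscale : c ^ α * x ^ (-(α + β)) = c ^ (α - 1) * x ^ (1 - α - β) * (c / x) := by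
    have hexp : 1 - α - β = -(α + β) + 1 := by ring
    rw [hexp, Real.rpow_add_one hx.ne', Real.rpow_sub_one hc.ne']
    field_simp
  rw [← mul_assoc, ← hscale, ← tsum_mul_left]
  exact tsum_congr fun n => rpow_neg_mul_rpow_neg_eq_betaPrimeKernel α β hc hx n.cast_add_one_pos

theorem tendsto_tsum_rpow_neg_mul_rpow_neg_div {α β c : ℝ} (hα : α < 1) (hβ : 1 - α < β)
    (hc : 0 < c) :
    Tendsto (fun x : ℝ =>
        (∑' n : ℕ, ((n : ℝ) + 1) ^ (-α) * (x + c * ((n : ℝ) + 1)) ^ (-β)) /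
          (c ^ (α - 1) * eulerBeta (1 - α) (β + α - 1) * x ^ (1 - α - β)))
      atTop (𝓝 1) := by
  have ha : 0 < 1 - α := by linarith
  have hb : 0 < β + α - 1 := by linarith
  have hB := (eulerBeta_pos ha hb).ne'
  have hmesh : Tendsto (fun x : ℝ => c / x) atTop (𝓝[>] 0) :=
    tendsto_nhdsWithin_iff.2 ⟨tendsto_const_nhds.div_atTop tendsto_id,
      (eventually_gt_atTop 0).mono fun x hx => div_pos hc hx⟩
  have hlim := ((tendsto_mul_tsum_betaPrimeKernel ha hb).comp hmesh).div_const
    (eulerBeta (1 - α) (β + α - 1))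
  rw [div_self hB] at hlim
  refine hlim.congr' ((eventually_gt_atTop 0).mono fun x (hx : 0 < x) => ?_)
  have hcx : c ^ (α - 1) * x ^ (1 - α - β) ≠ 0 := by positivity
  simp only [tsum_rpow_neg_mul_rpow_neg_eq α β hc hx, mul_right_comm _ (eulerBeta _ _),
    mul_div_mul_left _ _ hcx, Function.comp_apply]

theorem isBigO_add_const_rpow_atTop (d r : ℝ) :
    (fun x : ℝ => (x + d) ^ r) =O[atTop] fun x => x ^ r := by
  have hequiv : (fun x : ℝ => x + d) ~[atTop] id :=
    IsEquivalent.refl.add_isLittleO (isLittleO_const_id_atTop d)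
  have hnonneg : ∀ᶠ x : ℝ in atTop, 0 ≤ x + d :=
    (tendsto_atTop_add_const_right _ d tendsto_id).eventually_ge_atTop 0
  exact (hequiv.isTheta.rpow hnonneg (eventually_ge_atTop 0)).isBigO

theorem isBigO_sum_mul_add_rpow_atTop {ι : Type*} (s : Finset ι) (w d : ι → ℝ) (r : ℝ) :
    (fun x : ℝ => ∑ i ∈ s, w i * (x + d i) ^ r) =O[atTop] fun x => x ^ r :=
  .fun_sum fun i _ => (isBigO_add_const_rpow_atTop (d i) r).const_mul_left (w i)

theorem isLittleO_rpow_rpow_atTop {p q : ℝ} (hpq : p < q) :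
    (fun x : ℝ => x ^ p) =o[atTop] fun x => x ^ q := by
  refine isLittleO_of_tendsto' ?_ ?_
  · filter_upwards [eventually_gt_atTop 0] with x hx hq
    exact absurd hq (Real.rpow_pos_of_pos hx q).ne'
  · refine (tendsto_rpow_neg_atTop (sub_pos.2 hpq)).congr' ?_
    filter_upwards [eventually_gt_atTop 0] with x hx
    rw [← Real.rpow_sub hx, neg_sub]

theorem statement19_general {α β c : ℝ} (hα : α < 1) (hβ : 1 - α < β) (hc : 0 < c) :
    Tendsto (fun x : ℝ =>
        (∑' n : ℕ, ((n : ℝ) + 1) ^ (-α) * (x + c * ((n : ℝ) + 1)) ^ (-β)) /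
          (c ^ (α - 1) * eulerBeta (1 - α) (β + α - 1) * x ^ (1 - α - β)))
      atTop (𝓝 1) ∧
    (∀ N : ℕ,
      ((fun x : ℝ => ∑ n ∈ Finset.Icc 1 N, (n : ℝ) ^ (-α) * (x + c * n) ^ (-β))
          =O[atTop] fun x : ℝ => x ^ (-β)) ∧
      ((fun x : ℝ => ∑ n ∈ Finset.Icc 1 N, (n : ℝ) ^ (-α) * (x + c * n) ^ (-β))
          =o[atTop] fun x : ℝ => x ^ (1 - α - β))) ∧
    ((fun x : ℝ => x ^ (-β)) =o[atTop] fun x : ℝ => x ^ (1 - α - β)) := by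
  have hpow : (fun x : ℝ => x ^ (-β)) =o[atTop] fun x : ℝ => x ^ (1 - α - β) :=
    isLittleO_rpow_rpow_atTop (by linarith)
  have hpartial (N : ℕ) :
      (fun x : ℝ => ∑ n ∈ Finset.Icc 1 N, (n : ℝ) ^ (-α) * (x + c * n) ^ (-β))
        =O[atTop] fun x : ℝ => x ^ (-β) :=
    isBigO_sum_mul_add_rpow_atTop _ _ _ _
  exact ⟨tendsto_tsum_rpow_neg_mul_rpow_neg_div hα hβ hc,
    fun N => ⟨hpartial N, (hpartial N).trans_isLittleO hpow⟩, hpow⟩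

theorem statement19 (α β c : ℝ) (hα0 : 0 < α) (hα1 : α < 1) (hβ : 1 < β) (hc : 0 < c) :
    -- `Σ_{n=1}^∞ n^{-α} (x+cn)^{-β} ∼ c^{α-1} B(1-α, β+α-1) x^{1-α-β}` as `x → ∞`
    Tendsto (fun x : ℝ =>
        (∑' n : ℕ, ((n : ℝ) + 1) ^ (-α) * (x + c * ((n : ℝ) + 1)) ^ (-β)) /
          (c ^ (α - 1) * eulerBeta (1 - α) (β + α - 1) * x ^ (1 - α - β)))
      atTop (nhds 1) ∧
    -- for any fixed `N ≥ 1`, `Σ_{n=1}^N n^{-α} (x+cn)^{-β} = O(x^{-β}) = o(x^{1-α-β})`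
    (∀ N : ℕ, 1 ≤ N →
      ((fun x : ℝ => ∑ n ∈ Finset.Icc 1 N, (n : ℝ) ^ (-α) * (x + c * n) ^ (-β))
          =O[atTop] fun x : ℝ => x ^ (-β)) ∧
      ((fun x : ℝ => ∑ n ∈ Finset.Icc 1 N, (n : ℝ) ^ (-α) * (x + c * n) ^ (-β))
          =o[atTop] fun x : ℝ => x ^ (1 - α - β))) ∧
    -- and `x^{-β} = o(x^{1-α-β})`
    ((fun x : ℝ => x ^ (-β)) =o[atTop] fun x : ℝ => x ^ (1 - α - β)) := by
  obtain ⟨hseries, hpartial, hpow⟩ := statement19_general hα1 (by linarith : 1 - α < β) hc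
  exact ⟨hseries, fun N _ => hpartial N, hpow⟩

end
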